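/- arXiv:2202.08601 — 2 statements merged into one kernel-verified Lean document; each statement's English description precedes it below -/
import Mathlib

section
/- Let y ∈ ℂ⁶ ∖ {0} with Σ_k y_k = 0 and (Σ_k y_k²)² ≠ 4 Σ_k y_k⁴ (i.e. [y] does not lie on the Castelnuovo–Richmond quartic). Then the singular points of the cubic surface Σ₃ ∩ H_y are exactly the nodes [ε^A] with Σ_k ε^A_k y_k = 0. -/
open scoped BigOperators

/-- The vector `ε^A` with coordinate `1` on `A` and `-1` off `A`. -/
noncomputable def eps (A : Finset (Fin 6)) : Fin 6 → ℂ := fun k => if k ∈ A then 1 else -1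

/-- Power sums `p₂, p₄, p₆, p₈` of six numbers with `p₁ = p₃ = 0`, in terms of `e₂, e₄, e₆`. -/
lemma newton_aux (a b c d e f : ℂ) (h1 : a + b + c + d + e + f = 0)
    (h3 : a ^ 3 + b ^ 3 + c ^ 3 + d ^ 3 + e ^ 3 + f ^ 3 = 0) :
    ∃ u v w : ℂ, a ^ 2 + b ^ 2 + c ^ 2 + d ^ 2 + e ^ 2 + f ^ 2 = -2 * u ∧
      a ^ 4 + b ^ 4 + c ^ 4 + d ^ 4 + e ^ 4 + f ^ 4 = 2 * u ^ 2 - 4 * v ∧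
      a ^ 6 + b ^ 6 + c ^ 6 + d ^ 6 + e ^ 6 + f ^ 6 =
        -u * (2 * u ^ 2 - 4 * v) - v * (-2 * u) - 6 * w ∧
      a ^ 8 + b ^ 8 + c ^ 8 + d ^ 8 + e ^ 8 + f ^ 8 =
        -u * (-u * (2 * u ^ 2 - 4 * v) - v * (-2 * u) - 6 * w)
          - v * (2 * u ^ 2 - 4 * v) - w * (-2 * u) := by
  -- elementary symmetric functions of `a, b, c` and of `d, e, f`
  obtain ⟨r, hr⟩ : ∃ r, r = a + b + c := ⟨_, rfl⟩
  obtain ⟨s, hs⟩ : ∃ s, s = a * b + b * c + c * a := ⟨_, rfl⟩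
  obtain ⟨t, ht⟩ : ∃ t, t = a * b * c := ⟨_, rfl⟩
  obtain ⟨s', hs'⟩ : ∃ s', s' = d * e + e * f + f * d := ⟨_, rfl⟩
  obtain ⟨t', ht'⟩ : ∃ t', t' = d * e * f := ⟨_, rfl⟩
  have hr' : d + e + f = -r := by rw [hr]; linear_combination h1
  have cub : ∀ z, (z = a ∨ z = b ∨ z = c) → z ^ 3 = r * z ^ 2 - s * z + t := by
    rintro z (rfl | rfl | rfl) <;> rw [hr, hs, ht] <;> ring
  have cub' : ∀ z, (z = d ∨ z = e ∨ z = f) → z ^ 3 = -r * z ^ 2 - s' * z + t' := by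
    rintro z (rfl | rfl | rfl) <;> rw [← hr', hs', ht'] <;> ring
  have e3 : t + t' + r * s' - r * s = 0 := by
    have e1 : a ^ 3 + b ^ 3 + c ^ 3 = r ^ 3 - 3 * r * s + 3 * t := by
      rw [hr, hs, ht]; ring
    have e2 : d ^ 3 + e ^ 3 + f ^ 3 = (-r) ^ 3 - 3 * (-r) * s' + 3 * t' := by
      rw [← hr', hs', ht']; ring
    linear_combination (h3 - e1 - e2) / 3
  have P2 : a ^ 2 + b ^ 2 + c ^ 2 + d ^ 2 + e ^ 2 + f ^ 2 = -2 * (s + s' - r ^ 2) := by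
    have e1 : a ^ 2 + b ^ 2 + c ^ 2 = r ^ 2 - 2 * s := by rw [hr, hs]; ring
    have e2 : d ^ 2 + e ^ 2 + f ^ 2 = (-r) ^ 2 - 2 * s' := by rw [← hr', hs']; ring
    linear_combination e1 + e2
  -- every root satisfies the sextic
  obtain ⟨u, hu⟩ : ∃ u, u = s + s' - r ^ 2 := ⟨_, rfl⟩
  obtain ⟨v, hv⟩ : ∃ v, v = r * t' - r * t + s * s' := ⟨_, rfl⟩
  obtain ⟨m, hm⟩ : ∃ m, m = s * t' + s' * t := ⟨_, rfl⟩
  obtain ⟨w, hw⟩ : ∃ w, w = t * t' := ⟨_, rfl⟩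
  have six : ∀ z, (z = a ∨ z = b ∨ z = c ∨ z = d ∨ z = e ∨ z = f) →
      z ^ 6 = -u * z ^ 4 - v * z ^ 2 + m * z - w := by
    intro z hz
    have key : (z ^ 3 - r * z ^ 2 + s * z - t) * (z ^ 3 + r * z ^ 2 + s' * z - t') = 0 := by
      rcases hz with h | h | h | h | h | h
      · rw [cub z (by simp [h])]; ring
      · rw [cub z (by simp [h])]; ring
      · rw [cub z (by simp [h])]; ring
      · rw [cub' z (by simp [h])]; ring
      · rw [cub' z (by simp [h])]; ring
      · rw [cub' z (by simp [h])]; ring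
    rw [hu, hv, hm, hw]
    linear_combination key + z ^ 3 * e3
  have A := six a (by simp)
  have B := six b (by simp)
  have C := six c (by simp)
  have D := six d (by simp)
  have E := six e (by simp)
  have F := six f (by simp)
  rw [← hu] at P2
  have P4 : a ^ 4 + b ^ 4 + c ^ 4 + d ^ 4 + e ^ 4 + f ^ 4 = 2 * u ^ 2 - 4 * v := by
    have e1 : a ^ 4 + b ^ 4 + c ^ 4 = r ^ 4 - 4 * r ^ 2 * s + 2 * s ^ 2 + 4 * r * t := by
      rw [hr, hs, ht]; ring
    have e2 : d ^ 4 + e ^ 4 + f ^ 4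
        = (-r) ^ 4 - 4 * (-r) ^ 2 * s' + 2 * s' ^ 2 + 4 * (-r) * t' := by
      rw [← hr', hs', ht']; ring
    rw [hu, hv]
    linear_combination e1 + e2
  have P6 : a ^ 6 + b ^ 6 + c ^ 6 + d ^ 6 + e ^ 6 + f ^ 6 =
        -u * (2 * u ^ 2 - 4 * v) - v * (-2 * u) - 6 * w := by
    linear_combination A + B + C + D + E + F - u * P4 - v * P2 + m * h1
  refine ⟨u, v, w, P2, P4, P6, ?_⟩
  linear_combination a ^ 2 * A + b ^ 2 * B + c ^ 2 * C + d ^ 2 * D + e ^ 2 * E + f ^ 2 * F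
    - u * P6 - v * P4 + m * h3 - w * P2

/-- The polar quadric map sends the Segre cubic to the Castelnuovo–Richmond quartic. -/
lemma dual_aux (x y : Fin 6 → ℂ) (hsum : (∑ k, y k) = 0)
    (h1 : (∑ k, x k) = 0) (h3 : (∑ k, (x k) ^ 3) = 0) (α β γ : ℂ) (hγ : γ ≠ 0)
    (h : ∀ k, α + β * x k ^ 2 + γ * y k = 0) :
    (∑ k, (y k) ^ 2) ^ 2 = 4 * (∑ k, (y k) ^ 4) := by
  simp only [Fin.sum_univ_six] at *
  obtain ⟨u, v, w, P2, P4, P6, P8⟩ := newton_aux _ _ _ _ _ _ h1 h3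
  have hα : α = β * u / 3 := by
    linear_combination (h 0 + h 1 + h 2 + h 3 + h 4 + h 5 - γ * hsum - β * P2) / 6
  have hy : ∀ k, y k = (-β / γ) * (x k ^ 2 + u / 3) := by
    intro k
    field_simp
    linear_combination 3 * h k - 3 * hα
  simp only [hy]
  generalize -β / γ = δ
  have Q2 : (δ * (x 0 ^ 2 + u / 3)) ^ 2 + (δ * (x 1 ^ 2 + u / 3)) ^ 2
      + (δ * (x 2 ^ 2 + u / 3)) ^ 2 + (δ * (x 3 ^ 2 + u / 3)) ^ 2
      + (δ * (x 4 ^ 2 + u / 3)) ^ 2 + (δ * (x 5 ^ 2 + u / 3)) ^ 2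
      = δ ^ 2 * (4 / 3 * u ^ 2 - 4 * v) := by
    linear_combination δ ^ 2 * (P4 + 2 * u / 3 * P2)
  rw [Q2]
  linear_combination (-4) * δ ^ 4 * (P8 + 4 * u / 3 * P6 + 6 * u ^ 2 / 9 * P4 + 4 * u ^ 3 / 27 * P2)

/-- if `[y]` does not lie on the Castelnuovo–Richmond quartic, then the
singular points of the cubic surface `Σ₃ ∩ H_y` (Jacobian criterion: `(1,…,1)`,
`(x₀²,…,x₅²)`, `y` linearly dependent) are exactly the nodes `[ε^A]` with
`∑ ε^A_k y_k = 0`. -/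
theorem cubic_surface_section_singular_points (y : Fin 6 → ℂ) (hy : y ≠ 0)
    (hsum : (∑ k, y k) = 0)
    (hcr : (∑ k, (y k) ^ 2) ^ 2 ≠ 4 * (∑ k, (y k) ^ 4))
    (x : Fin 6 → ℂ) (hx : x ≠ 0) (h1 : (∑ k, x k) = 0) (h3 : (∑ k, (x k) ^ 3) = 0)
    (hxy : (∑ k, y k * x k) = 0) :
    ¬ LinearIndependent ℂ ![(1 : Fin 6 → ℂ), fun k => (x k) ^ 2, y] ↔
      ∃ A : Finset (Fin 6), A.card = 3 ∧ (∑ k, eps A k * y k) = 0 ∧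
        ∃ c : ℂ, c ≠ 0 ∧ x = c • eps A := by
  rw [Fintype.not_linearIndependent_iff]
  constructor
  · rintro ⟨g, hg, i, hi⟩
    have h : ∀ k, g 0 + g 1 * x k ^ 2 + g 2 * y k = 0 := by
      intro k
      have := congrFun hg k
      simpa [Fin.sum_univ_three] using this
    have h2 : g 2 = 0 := by
      by_contra h2
      exact hcr (dual_aux x y hsum h1 h3 _ _ _ h2 h)
    simp only [h2, zero_mul, add_zero] at h
    have hg1 : g 1 ≠ 0 := by
      intro hg1
      have h0 := h 0
      simp only [hg1, zero_mul, add_zero] at h0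
      fin_cases i <;> simp_all
    have hsq : ∀ k, x k ^ 2 = x 0 ^ 2 := by
      intro k
      apply mul_left_cancel₀ hg1
      linear_combination h k - h 0
    have hx0 : x 0 ≠ 0 := by
      intro h0
      apply hx
      funext k
      have := hsq k
      rw [h0] at this
      simpa using this
    let A : Finset (Fin 6) := Finset.univ.filter fun k => x k = x 0
    have hxe : ∀ k, x k = x 0 * eps A k := by
      intro k
      by_cases hk : x k = x 0
      · simp [eps, A, hk]
      · have := (sq_eq_sq_iff_eq_or_eq_neg.mp (hsq k)).resolve_left hk
        simp only [eps, A, Finset.mem_filter, Finset.mem_univ, true_and, if_neg hk]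
        rw [this]; ring
    refine ⟨A, ?_, ?_, x 0, hx0, ?_⟩
    · have hs : ∑ k, eps A k = 0 := by
        apply mul_left_cancel₀ hx0
        rw [Finset.mul_sum, mul_zero, ← h1]
        exact Finset.sum_congr rfl fun k _ => (hxe k).symm
      have e : ∀ k, eps A k = 2 * (if k ∈ A then 1 else 0) - 1 := by
        intro k
        unfold eps
        split_ifs <;> norm_num
      simp only [e, Finset.sum_sub_distrib, ← Finset.mul_sum] at hs
      simp only [Finset.sum_ite_mem, Finset.univ_inter, Finset.sum_const, Finset.card_univ,
        Fintype.card_fin, nsmul_eq_mul, mul_one] at hs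
      have : (A.card : ℂ) = (3 : ℕ) := by
        push_cast at hs ⊢
        linear_combination hs / 2
      exact_mod_cast this
    · apply mul_left_cancel₀ hx0
      rw [Finset.mul_sum, mul_zero, ← hxy]
      refine Finset.sum_congr rfl fun k _ => ?_
      rw [hxe k]
      ring
    · funext k
      simpa using hxe k
  · rintro ⟨A, -, -, c, hc, rfl⟩
    refine ⟨![-c ^ 2, 1, 0], ?_, 1, by simp⟩
    funext k
    simp only [Fin.sum_univ_three, eps]
    by_cases hk : k ∈ A <;> simp [eps, hk]
end

section
/- Define δ : ℂ⁶ → ℂ⁶ by δ(x)_k = 6 x_k² − Σ_{j=0}^{5} x_j². Then: (i) for every x ∈ ℂ⁶ ∖ {0} with Σ_k x_k = 0, Σ_k x_k³ = 0 and [x] on no Segre plane, one has δ(x) ≠ 0, Σ_k δ(x)_k = 0, (Σ_k δ(x)_k²)² = 4 Σ_k δ(x)_k⁴, and Σ_k ε^A_k δ(x)_k ≠ 0 for every 3-element subset A; (ii) the induced map [x] ↦ [δ(x)] is a bijection from the set of points of the Segre cubic Σ₃ lying on no Segre plane onto the set of points of the Castelnuovo–Richmond quartic CR₄ lying on none of the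 10 hyperplanes {[y] : Σ_k ε^A_k y_k = 0} dual to the nodes. -/
open scoped BigOperators

/-- A fixed-point-free involution of `{0,…,5}`. -/
def FPF (τ : Equiv.Perm (Fin 6)) : Prop :=
  (∀ i, τ (τ i) = i) ∧ ∀ i, τ i ≠ i

/-- The linear subspace `P_τ = {x ∈ ℂ⁶ : x i + x (τ i) = 0 for all i}`. -/
noncomputable def segrePlane (τ : Equiv.Perm (Fin 6)) : Submodule ℂ (Fin 6 → ℂ) where
  carrier := {x | ∀ i, x i + x (τ i) = 0}
  add_mem' := by
    intro a b ha hb i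
    simp only [Pi.add_apply]
    linear_combination ha i + hb i
  zero_mem' := by intro i; simp
  smul_mem' := by
    intro c x hx i
    simp only [Pi.smul_apply, smul_eq_mul]
    linear_combination c * hx i

/-- The duality map `δ(x)_k = 6 x_k² - ∑ x_j²`. -/
noncomputable def delta (x : Fin 6 → ℂ) : Fin 6 → ℂ :=
  fun k => 6 * (x k) ^ 2 - (∑ j, (x j) ^ 2)

/-- `x` represents a point of the Segre cubic lying on no Segre plane. -/
def SegreNoPlane (x : Fin 6 → ℂ) : Prop :=
  x ≠ 0 ∧ (∑ k, x k) = 0 ∧ (∑ k, (x k) ^ 3) = 0 ∧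
    ∀ τ : Equiv.Perm (Fin 6), FPF τ → x ∉ segrePlane τ

/-- `y` represents a point of the Castelnuovo–Richmond quartic lying on none of the 10
hyperplanes dual to the nodes of the Segre cubic. -/
def CRNoNodeHyp (y : Fin 6 → ℂ) : Prop :=
  y ≠ 0 ∧ (∑ k, y k) = 0 ∧ (∑ k, (y k) ^ 2) ^ 2 = 4 * (∑ k, (y k) ^ 4) ∧
    ∀ A : Finset (Fin 6), A.card = 3 → (∑ k, eps A k * y k) ≠ 0

/-- Elementary symmetric functions of six numbers with Newton's identities. -/
theorem six_newton (a b c d e f : ℂ) : ∃ e1 e2 e3 e4 e5 e6 : ℂ,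
    (∀ t, (t-a)*(t-b)*(t-c)*(t-d)*(t-e)*(t-f)
      = t^6 - e1*t^5 + e2*t^4 - e3*t^3 + e4*t^2 - e5*t + e6) ∧
    a + b + c + d + e + f = e1 ∧
    a^2 + b^2 + c^2 + d^2 + e^2 + f^2 = e1^2 - 2*e2 ∧
    a^3 + b^3 + c^3 + d^3 + e^3 + f^3 = e1^3 - 3*e1*e2 + 3*e3 ∧
    a^4 + b^4 + c^4 + d^4 + e^4 + f^4 = e1^4 - 4*e1^2*e2 + 2*e2^2 + 4*e1*e3 - 4*e4 ∧
    a^5 + b^5 + c^5 + d^5 + e^5 + f^5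
      = e1^5 - 5*e1^3*e2 + 5*e1*e2^2 + 5*e1^2*e3 - 5*e2*e3 - 5*e1*e4 + 5*e5 ∧
    (a+b)*(a+c)*(a+d)*(a+e)*(a+f) = a^4*e1 + a^2*e3 + e5 := by
  refine ⟨a + b + c + d + e + f, a*b + a*c + a*d + a*e + a*f + b*c + b*d + b*e + b*f + c*d + c*e + c*f + d*e + d*f + e*f, a*b*c + a*b*d + a*b*e + a*b*f + a*c*d + a*c*e + a*c*f + a*d*e + a*d*f + a*e*f + b*c*d + b*c*e + b*c*f + b*d*e + b*d*f + b*e*f + c*d*e + c*d*f + c*e*f + d*e*f, a*b*c*d + a*b*c*e + a*b*c*f + a*b*d*e + a*b*d*f + a*b*e*f + a*c*d*e + a*c*d*f + a*c*e*f + a*d*e*f + b*c*d*e + b*c*d*f + b*c*e*f + b*d*e*f + c*d*e*f, a*b*c*d*e + a*b*c*d*f + a*b*c*e*f + a*b*d*e*f + a*c*d*e*f + b*c*d*e*f, a*b*c*d*e*f, ?_, ?_, ?_, ?_, ?_, ?_, ?_⟩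
  · intro t; ring
  all_goals ring

theorem six_roots (y : Fin 6 → ℂ) (h1 : ∑ k, y k = 0) : ∃ e2 e3 e4 e5 e6 : ℂ,
    (∀ t, ∏ k, (t - y k) = t^6 + e2*t^4 - e3*t^3 + e4*t^2 - e5*t + e6) ∧
    (∀ k, y k^6 + e2*y k^4 - e3*y k^3 + e4*y k^2 - e5*y k + e6 = 0) ∧
    ∑ k, y k^2 = - 2*e2 ∧ ∑ k, y k^3 = 3*e3 ∧ ∑ k, y k^4 = 2*e2^2 - 4*e4 ∧
    ∑ k, y k^5 = 5*e5 - 5*e2*e3 ∧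
    (y 0+y 1)*(y 0+y 2)*(y 0+y 3)*(y 0+y 4)*(y 0+y 5) = (y 0)^2*e3 + e5 := by
  obtain ⟨e1, e2, e3, e4, e5, e6, H, n1, n2, n3, n4, n5, n6⟩ :=
    six_newton (y 0) (y 1) (y 2) (y 3) (y 4) (y 5)
  have z : e1 = 0 := by rw [← n1, ← h1]; simp [Fin.sum_univ_six]
  subst z
  have H' : ∀ t, ∏ k, (t - y k) = t^6 + e2*t^4 - e3*t^3 + e4*t^2 - e5*t + e6 := by
    intro t
    rw [Fin.prod_univ_six, H t]; ring
  refine ⟨e2, e3, e4, e5, e6, H', ?_, ?_, ?_, ?_, ?_, ?_⟩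
  · intro k
    rw [← H' (y k)]
    exact Finset.prod_eq_zero (Finset.mem_univ k) (sub_self _)
  · rw [Fin.sum_univ_six, n2]; ring
  · rw [Fin.sum_univ_six, n3]; ring
  · rw [Fin.sum_univ_six, n4]; ring
  · rw [Fin.sum_univ_six, n5]; ring
  · rw [n6]; ring

theorem four (a b c d : ℂ) (h1 : a + b + c + d = 0) (h3 : a^3 + b^3 + c^3 + d^3 = 0) :
    (a + b = 0 ∧ c + d = 0) ∨ (a + c = 0 ∧ b + d = 0) ∨ (a + d = 0 ∧ b + c = 0) := by
  have hd : d = -a - b - c := by linear_combination h1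
  subst hd
  have h : (a + b) * ((a + c) * (b + c)) = 0 := by linear_combination (-1/3) * h3
  rcases mul_eq_zero.1 h with h | h
  · exact Or.inl ⟨h, by linear_combination -h⟩
  rcases mul_eq_zero.1 h with h | h
  · exact Or.inr (Or.inl ⟨h, by linear_combination -h⟩)
  · exact Or.inr (Or.inr ⟨by linear_combination -h, h⟩)

/-- The involution pairing `i,j`, `k,l` and `m,n`. -/
theorem mk (x : Fin 6 → ℂ) (i j k l m n : Fin 6)
    (hF : (∀ t, (Equiv.swap i j * Equiv.swap k l * Equiv.swap m n)
        ((Equiv.swap i j * Equiv.swap k l * Equiv.swap m n) t) = t) ∧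
      (∀ t, (Equiv.swap i j * Equiv.swap k l * Equiv.swap m n) t ≠ t) ∧
      (∀ t, (t = i ∨ t = j ∨ t = k ∨ t = l ∨ t = m ∨ t = n) ∧
      (Equiv.swap i j * Equiv.swap k l * Equiv.swap m n) i = j ∧
      (Equiv.swap i j * Equiv.swap k l * Equiv.swap m n) k = l ∧
      (Equiv.swap i j * Equiv.swap k l * Equiv.swap m n) m = n))
    (h : x i + x j = 0) (h' : x k + x l = 0) (h'' : x m + x n = 0)
    (hp : ∀ τ : Equiv.Perm (Fin 6), FPF τ → x ∉ segrePlane τ) : False := by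
  obtain ⟨f1, f2, f3⟩ := hF
  refine hp (Equiv.swap i j * Equiv.swap k l * Equiv.swap m n) ⟨f1, f2⟩ ?_
  show ∀ t, x t + x ((Equiv.swap i j * Equiv.swap k l * Equiv.swap m n) t) = 0
  generalize Equiv.swap i j * Equiv.swap k l * Equiv.swap m n = τ at *
  intro t
  obtain ⟨hc, a, b, c⟩ := f3 t
  have a' := f1 i
  have b' := f1 k
  have c' := f1 m
  rw [a] at a'
  rw [b] at b'
  rw [c] at c'
  rcases hc with rfl | rfl | rfl | rfl | rfl | rfl
  · rw [a]; exact h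
  · rw [a', add_comm]; exact h
  · rw [b]; exact h'
  · rw [b', add_comm]; exact h'
  · rw [c]; exact h''
  · rw [c', add_comm]; exact h''

theorem on_plane (x : Fin 6 → ℂ) (hs1 : ∑ k, x k = 0) (hs3 : ∑ k, x k^3 = 0)
    (h0 : (x 0+x 1)*(x 0+x 2)*(x 0+x 3)*(x 0+x 4)*(x 0+x 5) = 0)
    (hp : ∀ τ : Equiv.Perm (Fin 6), FPF τ → x ∉ segrePlane τ) : False := by
  have h1 := hs1
  have h3 := hs3
  rw [Fin.sum_univ_six] at h1 h3
  simp only [mul_eq_zero] at h0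
  rcases h0 with (((hk | hk) | hk) | hk) | hk
  · have h := four (x 2) (x 3) (x 4) (x 5) (by linear_combination h1 - hk) (by linear_combination h3 - (x 0 ^ 2 - x 0 * x 1 + x 1 ^ 2) * hk)
    rcases h with ⟨u, w⟩ | ⟨u, w⟩ | ⟨u, w⟩
    · exact mk x 0 1 2 3 4 5 (by decide) hk u w hp
    · exact mk x 0 1 2 4 3 5 (by decide) hk u w hp
    · exact mk x 0 1 2 5 3 4 (by decide) hk u w hp
  · have h := four (x 1) (x 3) (x 4) (x 5) (by linear_combination h1 - hk) (by linear_combination h3 - (x 0 ^ 2 - x 0 * x 2 + x 2 ^ 2) * hk)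
    rcases h with ⟨u, w⟩ | ⟨u, w⟩ | ⟨u, w⟩
    · exact mk x 0 2 1 3 4 5 (by decide) hk u w hp
    · exact mk x 0 2 1 4 3 5 (by decide) hk u w hp
    · exact mk x 0 2 1 5 3 4 (by decide) hk u w hp
  · have h := four (x 1) (x 2) (x 4) (x 5) (by linear_combination h1 - hk) (by linear_combination h3 - (x 0 ^ 2 - x 0 * x 3 + x 3 ^ 2) * hk)
    rcases h with ⟨u, w⟩ | ⟨u, w⟩ | ⟨u, w⟩
    · exact mk x 0 3 1 2 4 5 (by decide) hk u w hp
    · exact mk x 0 3 1 4 2 5 (by decide) hk u w hp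
    · exact mk x 0 3 1 5 2 4 (by decide) hk u w hp
  · have h := four (x 1) (x 2) (x 3) (x 5) (by linear_combination h1 - hk) (by linear_combination h3 - (x 0 ^ 2 - x 0 * x 4 + x 4 ^ 2) * hk)
    rcases h with ⟨u, w⟩ | ⟨u, w⟩ | ⟨u, w⟩
    · exact mk x 0 4 1 2 3 5 (by decide) hk u w hp
    · exact mk x 0 4 1 3 2 5 (by decide) hk u w hp
    · exact mk x 0 4 1 5 2 3 (by decide) hk u w hp
  · have h := four (x 1) (x 2) (x 3) (x 4) (by linear_combination h1 - hk) (by linear_combination h3 - (x 0 ^ 2 - x 0 * x 5 + x 5 ^ 2) * hk)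
    rcases h with ⟨u, w⟩ | ⟨u, w⟩ | ⟨u, w⟩
    · exact mk x 0 5 1 2 3 4 (by decide) hk u w hp
    · exact mk x 0 5 1 3 2 4 (by decide) hk u w hp
    · exact mk x 0 5 1 4 2 3 (by decide) hk u w hp

/-- Everything needed about `δ` on the Segre cubic off the planes. -/
theorem segre_data (x : Fin 6 → ℂ) (hx : SegreNoPlane x) : ∃ e : ℂ, e ≠ 0 ∧
    (∑ k, delta x k) = 0 ∧ (∑ k, delta x k ^ 2) ^ 2 = 4 * (∑ k, delta x k ^ 4) ∧
    (∀ k, 216 * e * x k = delta x k ^ 3 - (∑ j, delta x j ^ 2) / 4 * delta x k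
      - (∑ j, delta x j ^ 3) / 6) ∧
    12 * (∑ k, delta x k ^ 5) - 5 * (∑ k, delta x k ^ 2) * (∑ k, delta x k ^ 3)
      = 466560 * e ^ 2 := by
  obtain ⟨-, h1, h3, hp⟩ := hx
  obtain ⟨e2, e3, e4, e5, e6, -, R, n2, n3, n4, n5, n6⟩ := six_roots x h1
  have z : e3 = 0 := by linear_combination (h3 - n3) / 3
  subst z
  have he : e5 ≠ 0 := by
    rintro rfl
    exact on_plane x h1 h3 (by rw [n6]; ring) hp
  have n6 : ∑ k, x k^6 = -e2 * (∑ k, x k^4) - e4 * (∑ k, x k^2) - 6 * e6 := by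
    have : ∑ k, (x k^6 + e2*x k^4 - 0*x k^3 + e4*x k^2 - e5*x k + e6) = 0 :=
      Finset.sum_eq_zero fun k _ => R k
    simp only [Fin.sum_univ_six] at *
    linear_combination this + e5 * h1
  have n8 : ∑ k, x k^8 = -e2 * (∑ k, x k^6) - e4 * (∑ k, x k^4) - e6 * (∑ k, x k^2) := by
    have : ∑ k, x k^2*(x k^6 + e2*x k^4 - 0*x k^3 + e4*x k^2 - e5*x k + e6) = 0 :=
      Finset.sum_eq_zero fun k _ => by rw [R k, mul_zero]
    simp only [Fin.sum_univ_six] at *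
    linear_combination this + e5 * h3
  have n10 : ∑ k, x k^10 = -e2 * (∑ k, x k^8) - e4 * (∑ k, x k^6) - e6 * (∑ k, x k^4)
      + e5 * (∑ k, x k^5) := by
    have : ∑ k, x k^4*(x k^6 + e2*x k^4 - 0*x k^3 + e4*x k^2 - e5*x k + e6) = 0 :=
      Finset.sum_eq_zero fun k _ => by rw [R k, mul_zero]
    simp only [Fin.sum_univ_six] at *
    linear_combination this
  have hd : ∀ k, delta x k = 6 * x k^2 + 2 * e2 := by
    intro k; simp only [delta]; rw [n2]; ring
  have d1 : ∑ k, delta x k = 6 * (∑ k, x k^2) + 12 * e2 := by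
    simp only [hd, Fin.sum_univ_six]; ring
  have d2 : ∑ k, delta x k^2 = 36 * (∑ k, x k^4) + 24 * e2 * (∑ k, x k^2) + 24 * e2^2 := by
    simp only [hd, Fin.sum_univ_six]; ring
  have d3 : ∑ k, delta x k^3 = 216 * (∑ k, x k^6) + 3*36*2*e2 * (∑ k, x k^4)
      + 3*6*4*e2^2 * (∑ k, x k^2) + 48 * e2^3 := by
    simp only [hd, Fin.sum_univ_six]; ring
  have d4 : ∑ k, delta x k^4 = 1296 * (∑ k, x k^8) + 4*216*2*e2 * (∑ k, x k^6)
      + 6*36*4*e2^2 * (∑ k, x k^4) + 4*6*8*e2^3 * (∑ k, x k^2) + 96 * e2^4 := by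
    simp only [hd, Fin.sum_univ_six]; ring
  have d5 : ∑ k, delta x k^5 = 7776 * (∑ k, x k^10) + 5*1296*2*e2 * (∑ k, x k^8)
      + 10*216*4*e2^2 * (∑ k, x k^6) + 10*36*8*e2^3 * (∑ k, x k^4)
      + 5*6*16*e2^4 * (∑ k, x k^2) + 6*32 * e2^5 := by
    simp only [hd, Fin.sum_univ_six]; ring
  rw [n10, n8, n6, n4, n2, n5] at d5
  rw [n8, n6, n4, n2] at d4
  rw [n6, n4, n2] at d3
  rw [n4, n2] at d2
  rw [n2] at d1
  refine ⟨e5, he, ?_, ?_, ?_, ?_⟩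
  · rw [d1]; ring
  · rw [d2, d4]; ring
  · intro k
    rw [d2, d3, hd k]
    linear_combination (-216) * R k
  · rw [d2, d3, d5]; ring

theorem sum_eps (A : Finset (Fin 6)) (y : Fin 6 → ℂ) :
    ∑ k, eps A k * y k = 2 * ∑ k ∈ A, y k - ∑ k, y k := by
  have : ∀ k, eps A k * y k = 2 * (if k ∈ A then y k else 0) - y k := by
    intro k; simp only [eps]; split_ifs <;> ring
  simp only [this, Finset.sum_sub_distrib, ← Finset.mul_sum]
  congr 2
  simp

/-- On a node hyperplane, the discriminating quintic vanishes. -/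
theorem hyp_quintic (y : Fin 6 → ℂ) (h1 : ∑ k, y k = 0)
    (h4 : (∑ k, y k ^ 2) ^ 2 = 4 * (∑ k, y k ^ 4)) (A : Finset (Fin 6)) (hA : A.card = 3)
    (h : ∑ k, eps A k * y k = 0) :
    12 * (∑ k, y k ^ 5) - 5 * (∑ k, y k ^ 2) * (∑ k, y k ^ 3) = 0 := by
  rw [sum_eps, h1] at h
  have hB : Aᶜ.card = 3 := by rw [Finset.card_compl, hA]; rfl
  have sp : ∀ g : Fin 6 → ℂ, ∑ k, g k = ∑ k ∈ A, g k + ∑ k ∈ Aᶜ, g k :=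
    fun g => (Finset.sum_add_sum_compl A g).symm
  rw [sp] at h1
  rw [sp, sp] at h4
  rw [sp, sp, sp]
  obtain ⟨a, b, c, ab, ac, bc, rfl⟩ := Finset.card_eq_three.1 hA
  obtain ⟨d, e, f, de, df, ef, hD⟩ := Finset.card_eq_three.1 hB
  rw [hD] at h1 h4 ⊢
  have S : ∀ g : Fin 6 → ℂ, ∑ k ∈ ({a, b, c} : Finset (Fin 6)), g k = g a + g b + g c := by
    intro g; rw [Finset.sum_insert (by simp [ab, ac]), Finset.sum_pair bc]; ring
  have S' : ∀ g : Fin 6 → ℂ, ∑ k ∈ ({d, e, f} : Finset (Fin 6)), g k = g d + g e + g f := by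
    intro g; rw [Finset.sum_insert (by simp [de, df]), Finset.sum_pair ef]; ring
  simp only [S, S'] at h h1 h4 ⊢
  clear sp S S' hD hA hB
  generalize y a = a at *
  generalize y b = b at *
  generalize y c = c at *
  generalize y d = d at *
  generalize y e = e at *
  generalize y f = f at *
  have hc : c = -a - b := by linear_combination h / 2
  have hf : f = -d - e := by linear_combination h1 - h / 2
  subst hc hf
  have q : (a^2 + a*b + b^2) - (d^2 + d*e + e^2) = 0 := by
    rw [← sq_eq_zero_iff]
    linear_combination (-1/4) * h4
  linear_combination (30 * (d * e * (d + e) - a * b * (a + b))) * q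

theorem cubic_split (a b : ℂ) : ∃ r s u : ℂ, r + s + u = 0 ∧
    ∀ t, t^3 + a*t + b = (t - r)*(t - s)*(t - u) := by
  obtain ⟨r, hr⟩ := IsAlgClosed.exists_root (Polynomial.X^3 + Polynomial.C a * Polynomial.X
    + Polynomial.C b : Polynomial ℂ) (by
      have : (Polynomial.X^3 + Polynomial.C a * Polynomial.X
        + Polynomial.C b : Polynomial ℂ).degree = 3 := by compute_degree!
      rw [this]; decide)
  obtain ⟨s, hs⟩ := IsAlgClosed.exists_root (Polynomial.X^2 + Polynomial.C r * Polynomial.X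
    + Polynomial.C (a + r^2) : Polynomial ℂ) (by
      have : (Polynomial.X^2 + Polynomial.C r * Polynomial.X
        + Polynomial.C (a + r^2) : Polynomial ℂ).degree = 2 := by compute_degree!
      rw [this]; decide)
  simp [Polynomial.IsRoot] at hr hs
  refine ⟨r, s, -r - s, by ring, fun t => ?_⟩
  linear_combination hr + (t - r) * hs

theorem le_map_lift {α β : Type*} (f : α → β) (t : Multiset β) :
    ∀ s : Multiset α, t ≤ s.map f → ∃ B ≤ s, B.map f = t := by
  induction t using Multiset.induction_on with
  | empty => exact fun s _ => ⟨0, Multiset.zero_le s, rfl⟩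
  | cons b t ih =>
    intro s h
    have hb : b ∈ s.map f := Multiset.mem_of_le h (Multiset.mem_cons_self b t)
    obtain ⟨a, ha, rfl⟩ := Multiset.mem_map.1 hb
    obtain ⟨s', rfl⟩ := Multiset.exists_cons_of_mem ha
    rw [Multiset.map_cons, Multiset.cons_le_cons_iff] at h
    obtain ⟨B, hB, rfl⟩ := ih s' h
    exact ⟨a ::ₘ B, Multiset.cons_le_cons a hB, Multiset.map_cons _ _ _⟩

open Polynomial in
/-- If the product of the `t - y k` is a product of two depressed cubics, then `y` lies on a
node hyperplane. -/
theorem on_hyp (y : Fin 6 → ℂ) (h1 : ∑ k, y k = 0) (a b c d : ℂ)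
    (h : ∀ t, ∏ k, (t - y k) = (t^3 + a*t + b) * (t^3 + c*t + d)) :
    ∃ A : Finset (Fin 6), A.card = 3 ∧ ∑ k, eps A k * y k = 0 := by
  obtain ⟨r, s, u, hr, H⟩ := cubic_split a b
  obtain ⟨r', s', u', -, H'⟩ := cubic_split c d
  have hm : (Finset.univ.val.map y) = ({r, s, u} + {r', s', u'} : Multiset ℂ) := by
    have : ((Finset.univ.val.map y).map fun z => X - C z).prod
        = (({r, s, u} + {r', s', u'} : Multiset ℂ).map fun z => X - C z).prod := by
      apply Polynomial.funext
      intro t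
      have := h t
      rw [H, H'] at this
      rw [Multiset.map_map]
      change (∏ k, (X - C (y k))).eval t = _
      simp only [eval_prod, eval_sub, eval_X, eval_C, this]
      simp
      ring
    have h2 := congrArg Polynomial.roots this
    rwa [roots_multiset_prod_X_sub_C, roots_multiset_prod_X_sub_C] at h2
  have hle : ({r, s, u} : Multiset ℂ) ≤ Finset.univ.val.map y := by
    rw [hm]; exact Multiset.le_add_right _ _
  obtain ⟨B, hB, hBe⟩ : ∃ B ≤ (Finset.univ : Finset (Fin 6)).val,
      B.map y = ({r, s, u} : Multiset ℂ) := by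
    exact le_map_lift y _ _ hle
  refine ⟨⟨B, Multiset.nodup_of_le hB Finset.univ.nodup⟩, ?_, ?_⟩
  · change B.card = 3
    rw [← Multiset.card_map y B, hBe]; rfl
  · rw [sum_eps, h1]
    change 2 * (B.map y).sum - 0 = 0
    rw [hBe]
    simp
    linear_combination hr

/-- (i) for `[x]` on the Segre cubic but on no Segre plane, `δ(x)` is a
nonzero vector representing a point of the Castelnuovo–Richmond quartic lying on none of
the 10 hyperplanes dual to the nodes; (ii) the induced map `[x] ↦ [δ(x)]` is a
well-defined bijection between these two loci. -/
theorem duality_map_bijection :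
    (∀ x : Fin 6 → ℂ, SegreNoPlane x → CRNoNodeHyp (delta x)) ∧
    (∀ x x' : Fin 6 → ℂ, SegreNoPlane x → SegreNoPlane x' →
      (∃ c : ℂ, c ≠ 0 ∧ x' = c • x) → ∃ c : ℂ, c ≠ 0 ∧ delta x' = c • delta x) ∧
    (∀ x x' : Fin 6 → ℂ, SegreNoPlane x → SegreNoPlane x' →
      (∃ c : ℂ, c ≠ 0 ∧ delta x' = c • delta x) → ∃ c : ℂ, c ≠ 0 ∧ x' = c • x) ∧
    (∀ y : Fin 6 → ℂ, CRNoNodeHyp y →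
      ∃ x : Fin 6 → ℂ, SegreNoPlane x ∧ ∃ c : ℂ, c ≠ 0 ∧ y = c • delta x) := by
  
  refine ⟨?_, ?_, ?_, ?_⟩
  · intro x hx
    obtain ⟨e, he, h1, h4, -, hq⟩ := segre_data x hx
    have hA : ∀ A : Finset (Fin 6), A.card = 3 → (∑ k, eps A k * delta x k) ≠ 0 := by
      intro A hA h
      rw [hyp_quintic _ h1 h4 A hA h] at hq
      have : e ^ 2 = 0 := by linear_combination (-1/466560) * hq
      exact he (pow_eq_zero_iff (by norm_num) |>.1 this)
    refine ⟨?_, h1, h4, hA⟩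
    intro h0
    refine hA {0, 1, 2} rfl ?_
    simp [h0]
  · rintro x x' - - ⟨c, hc, rfl⟩
    refine ⟨c^2, pow_ne_zero 2 hc, ?_⟩
    funext k
    simp only [delta, Pi.smul_apply, smul_eq_mul, Fin.sum_univ_six]
    ring
  · rintro x x' hx hx' ⟨c, hc, h⟩
    obtain ⟨e, he, -, -, hk, -⟩ := segre_data x hx
    obtain ⟨e', he', -, -, hk', -⟩ := segre_data x' hx'
    refine ⟨c^3 * e / e', div_ne_zero (mul_ne_zero (pow_ne_zero 3 hc) he) he', ?_⟩
    funext k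
    have a := hk k
    have b := hk' k
    rw [h] at b
    simp only [Pi.smul_apply, smul_eq_mul, Fin.sum_univ_six] at a b ⊢
    field_simp
    linear_combination (b - c^3 * a) / 216
  · rintro y ⟨hy0, h1, h4, hA⟩
    obtain ⟨e2, e3, e4, e5, e6, P, R, n2, n3, n4, n5, -⟩ := six_roots y h1
    have z : e4 = e2^2 / 4 := by
      rw [n2, n4] at h4
      linear_combination h4 / 16
    subst z
    have hκ : e5 - e2 * e3 / 2 ≠ 0 := by
      intro hκ
      obtain ⟨g, hg⟩ := IsAlgClosed.exists_pow_nat_eq (e3^2 / 4 - e6) (n := 2) (by norm_num)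
      obtain ⟨A, hA3, hs⟩ := on_hyp y h1 (e2/2) (-e3/2 + g) (e2/2) (-e3/2 - g) (by
        intro t
        rw [P t]
        linear_combination (-t) * hκ + hg)
      exact hA A hA3 hs
    obtain ⟨w, hw⟩ := IsAlgClosed.exists_pow_nat_eq (e5 - e2 * e3 / 2) (n := 2) (by norm_num)
    have hw0 : w ≠ 0 := by
      rintro rfl
      exact hκ (by rw [← hw]; ring)
    set m : ℂ := (e3^2/4 - e6) / w^2 with hm
    have hm' : m * w^2 = e3^2/4 - e6 := by rw [hm]; field_simp
    let x : Fin 6 → ℂ := fun k => (y k^3 + e2/2 * y k - e3/2) / w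
    have hxw : ∀ k, x k * w = y k^3 + e2/2 * y k - e3/2 := by
      intro k; simp only [x]; field_simp
    have hx2 : ∀ k, x k^2 = y k + m := by
      intro k
      have : w^2 * (x k^2 - (y k + m)) = 0 := by
        linear_combination (x k * w + (y k^3 + e2/2 * y k - e3/2)) * hxw k + R k - hm' - y k * hw
      rcases mul_eq_zero.1 this with h | h
      · exact absurd h (pow_ne_zero 2 hw0)
      · linear_combination h
    have hy_ne : ¬ ∀ k, x k = 0 := by
      intro h
      have hy : ∀ k, y k = -m := by
        intro k
        have := hx2 k
        rw [h k] at this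
        linear_combination -this
      simp [hy] at h1
      apply hy0
      funext k
      simp [hy k, h1]
    have hs1 : ∑ k, x k = 0 := by
      have : w * ∑ k, x k = 0 := by
        have := fun k => hxw k
        simp only [Fin.sum_univ_six] at *
        linear_combination hxw 0 + hxw 1 + hxw 2 + hxw 3 + hxw 4 + hxw 5 + n3 + e2/2 * h1
      exact (mul_eq_zero.1 this).resolve_left hw0
    have hs3 : ∑ k, x k^3 = 0 := by
      have e : ∑ k, x k^3 = ∑ k, (y k + m) * x k :=
        Finset.sum_congr rfl fun k _ => by rw [← hx2 k]; ring
      have : w * ∑ k, x k^3 = 0 := by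
        rw [e]
        simp only [Fin.sum_univ_six] at *
        linear_combination y 0 * hxw 0 + y 1 * hxw 1 + y 2 * hxw 2 + y 3 * hxw 3 + y 4 * hxw 4
          + y 5 * hxw 5 + n4 + e2/2 * n2 - e3/2 * h1 + w * m * hs1
      exact (mul_eq_zero.1 this).resolve_left hw0
    refine ⟨x, ⟨?_, hs1, hs3, ?_⟩, 1/6, by norm_num, ?_⟩
    · intro h
      exact hy_ne fun k => by rw [h]; rfl
    · intro τ hτ hx
      apply hy_ne
      intro k
      have hk : x k + x (τ k) = 0 := hx k
      have hyk : y k = y (τ k) := by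
        linear_combination hx2 (τ k) - hx2 k + (x k - x (τ k)) * hk
      have hxk : x k = x (τ k) := by simp only [x, hyk]
      linear_combination (hk + hxk) / 2
    · funext k
      simp only [delta, Pi.smul_apply, smul_eq_mul, hx2]
      simp only [Fin.sum_univ_six] at *
      linear_combination (1/6) * h1
end
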